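/- arXiv:2504.03575 — 2 statements merged into one kernel-verified Lean document; each statement's English description precedes it below -/
import Mathlib

section
/- (Hadwiger) Let 𝒞 be a convex body (compact convex set) in d-dimensional Euclidean space with volume Vol(𝒞). Then there exists a hyperrectangle P (a rotated and translated rectangular box, i.e. an image of a product of closed intervals under an isometry of ℝ^d) which covers 𝒞 (𝒞 ⊆ P) and whose volume satisfies Vol(P) ≤ d!·Vol(𝒞). -/
open MeasureTheory Matrix

/-- A hyperrectangle in `ℝ^d`: the image of an axis-parallel box `[a₁,b₁] × ⋯ × [a_d,b_d]`
under a rigid motion (a rotation `R ∈ SO(d)` followed by a translation by `t`). -/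
def IsHyperrectangle {d : ℕ} (P : Set (Fin d → ℝ)) : Prop :=
  ∃ (R : Matrix (Fin d) (Fin d) ℝ) (t a b : Fin d → ℝ),
    Rᵀ * R = 1 ∧ R.det = 1 ∧ a ≤ b ∧
    P = (fun x => R.mulVec x + t) '' Set.Icc a b

theorem hw_lint (d : ℕ) : ∫⁻ s in Set.Icc (0:ℝ) 1, ENNReal.ofReal ((1 - s) ^ d) = ENNReal.ofReal (1 / (d + 1)) := by
  rw [← ofReal_integral_eq_lintegral_ofReal]
  · congr 1
    rw [integral_Icc_eq_integral_Ioc, ← intervalIntegral.integral_of_le zero_le_one]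
    rw [intervalIntegral.integral_comp_sub_left (fun x => x ^ d) 1]
    simp
  · exact (Continuous.integrableOn_Icc (by fun_prop))
  · filter_upwards [ae_restrict_mem measurableSet_Icc] with s hs
    exact pow_nonneg (by linarith [hs.2]) _

theorem hw_cone (d : ℕ) (C : Set (ℝ × (Fin d → ℝ))) (hc : IsCompact C) (hv : Convex ℝ C)
    (t0 D : ℝ) (x0 : Fin d → ℝ) (hD : 0 ≤ D) (h0 : (t0, x0) ∈ C) (h1 : (t0 + D, x0) ∈ C) :
    ENNReal.ofReal D * volume (Prod.snd '' C) ≤ ((d + 1 : ℕ) : ENNReal) * volume C := by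
  set C' := Prod.snd '' C with hC'
  have hc' : IsCompact C' := hc.image continuous_snd
  set K : Set (ℝ × (Fin d → ℝ)) :=
    (fun z : ℝ × (Fin d → ℝ) => (z.1, AffineMap.homothety x0 (1 - z.1) z.2)) '' (Set.Icc 0 1 ×ˢ C') with hK
  have hKc : IsCompact K := by
    refine (isCompact_Icc.prod hc').image ?_
    simp only [AffineMap.homothety_apply]
    simp only [vsub_eq_sub, vadd_eq_add]
    fun_prop
  have hKm : MeasurableSet K := hKc.isClosed.measurableSet
  have hCm : MeasurableSet C := hc.isClosed.measurableSet
  have A : ENNReal.ofReal (1 / (d + 1)) * volume C' ≤ volume K := by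
    rw [Measure.volume_eq_prod, Measure.prod_apply hKm, ← hw_lint, ← lintegral_mul_const]
    · refine le_trans (setLIntegral_mono' measurableSet_Icc ?_) (setLIntegral_le_lintegral (Set.Icc 0 1) _)
      intro s hs
      have : ENNReal.ofReal ((1 - s) ^ d) * volume C' = volume (AffineMap.homothety x0 (1 - s) '' C') := by
        rw [Measure.addHaar_image_homothety]
        simp [abs_of_nonneg (show 0 ≤ 1 - s by linarith [hs.2])]
      rw [this]
      apply measure_mono
      rintro _ ⟨y, hy, rfl⟩
      exact ⟨(s, y), ⟨hs, hy⟩, rfl⟩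
    · fun_prop
  have B : ENNReal.ofReal D * volume K ≤ volume C := by
    rw [Measure.volume_eq_prod, Measure.prod_apply_symm hKm, Measure.prod_apply_symm hCm,
      ← lintegral_const_mul]
    · apply lintegral_mono
      intro x
      simp only
      have key : ∀ s ∈ (fun t => (t, x)) ⁻¹' K, 0 ≤ s ∧ ENNReal.ofReal (s * D) ≤ volume ((fun t => (t, x)) ⁻¹' C) := by
        rintro s ⟨⟨s', y⟩, ⟨hs, ⟨⟨t, y'⟩, hy, rfl⟩⟩, he⟩
        simp only [Prod.mk.injEq] at he
        obtain ⟨rfl, he⟩ := he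
        refine ⟨hs.1, ?_⟩
        have : Set.Icc ((1 - s') * t + s' * t0) ((1 - s') * t + s' * t0 + s' * D) ⊆ (fun t => (t, x)) ⁻¹' C := by
          have e0 := hv hy h0 (show 0 ≤ 1 - s' by linarith [hs.2]) hs.1 (by ring)
          have e1 := hv hy h1 (show 0 ≤ 1 - s' by linarith [hs.2]) hs.1 (by ring)
          have hx : (1 - s') • y' + s' • x0 = x := by
            rw [← he]
            simp only [AffineMap.homothety_apply, vsub_eq_sub, vadd_eq_add]
            module
          simp only [Prod.smul_mk, Prod.mk_add_mk, smul_eq_mul, hx] at e0 e1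
          have hcv : Convex ℝ ((fun t => (t, x)) ⁻¹' C) := by
            intro a ha b hb u v hu hv' huv
            have := hv ha hb hu hv' huv
            simp only [Prod.smul_mk, Prod.mk_add_mk, ← add_smul, huv, one_smul] at this
            exact this
          have := hcv.ordConnected.out e0 e1
          have e : (1 - s') * t + s' * t0 + s' * D = (1 - s') * t + s' * (t0 + D) := by ring
          rw [e]
          exact this
        refine le_trans ?_ (measure_mono this)
        rw [Real.volume_Icc]
        apply ENNReal.ofReal_le_ofReal
        linarith
      rcases hD.eq_or_lt with h | hDp
      · simp [← h]
      by_cases hf : volume ((fun t => (t, x)) ⁻¹' C) = ⊤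
      · rw [hf]; exact le_top
      set L := (volume ((fun t => (t, x)) ⁻¹' C)).toReal with hL
      have hLv : volume ((fun t => (t, x)) ⁻¹' C) = ENNReal.ofReal L := (ENNReal.ofReal_toReal hf).symm
      have hsub : (fun t => (t, x)) ⁻¹' K ⊆ Set.Icc 0 (L / D) := by
        intro s hs
        obtain ⟨h1, h2⟩ := key s hs
        rw [hLv, ENNReal.ofReal_le_ofReal_iff ENNReal.toReal_nonneg] at h2
        exact ⟨h1, by rwa [le_div_iff₀ hDp]⟩
      rw [hLv]
      refine le_trans (mul_le_mul_right (measure_mono hsub) _) ?_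
      rw [Real.volume_Icc, ← ENNReal.ofReal_mul hD]
      apply ENNReal.ofReal_le_ofReal
      rw [sub_zero, mul_div_cancel₀ _ hDp.ne']
    · exact measurable_measure_prodMk_right hKm
  have E : ((d + 1 : ℕ) : ENNReal) * ENNReal.ofReal (1 / (d + 1)) = 1 := by
    rw [← ENNReal.ofReal_natCast, ← ENNReal.ofReal_mul (by positivity)]
    rw [← ENNReal.ofReal_one]; congr 1; push_cast; field_simp
  calc ENNReal.ofReal D * volume C' = ((d + 1 : ℕ) : ENNReal) * (ENNReal.ofReal D * (ENNReal.ofReal (1 / (d + 1)) * volume C')) := by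
        rw [← one_mul (ENNReal.ofReal D * volume C'), ← E]; ring
    _ ≤ _ := by gcongr; exact le_trans (by gcongr) B

theorem hw_cone' (d : ℕ) (C : Set (Fin (d + 1) → ℝ)) (hc : IsCompact C) (hv : Convex ℝ C)
    (D : ℝ) (p : Fin (d + 1) → ℝ) (hD : 0 ≤ D) (h0 : p ∈ C) (h1 : p + Pi.single 0 D ∈ C) :
    ENNReal.ofReal D * volume (Fin.tail '' C) ≤ ((d + 1 : ℕ) : ENNReal) * volume C := by
  set f : (Fin (d + 1) → ℝ) → ℝ × (Fin d → ℝ) := fun x => (x 0, Fin.tail x) with hf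
  have hmp : MeasurePreserving f volume volume :=
    volume_preserving_piFinSuccAbove (fun _ => ℝ) 0
  have hinj : Function.Injective f := by
    intro x y h
    simp only [hf, Prod.mk.injEq] at h
    rw [← Fin.cons_self_tail x, ← Fin.cons_self_tail y, h.1, h.2]
  have hfc : Continuous f := by
    simp only [hf]; unfold Fin.tail; fun_prop
  have hvol : volume (f '' C) = volume C := by
    rw [← hmp.measure_preimage ((hc.image hfc).isClosed.measurableSet.nullMeasurableSet),
      Set.preimage_image_eq _ hinj]
  have hlin : IsLinearMap ℝ f := ⟨fun x y => rfl, fun c x => rfl⟩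
  have := hw_cone d (f '' C) (hc.image hfc) (hv.is_linear_image hlin) (p 0) D (Fin.tail p) hD
    ⟨p, h0, rfl⟩ ⟨_, h1, by
      simp only [hf, Prod.mk.injEq]
      refine ⟨by simp, ?_⟩
      ext i; simp [Fin.tail]⟩
  rwa [hvol, Set.image_image] at this

theorem hw_rot (d : ℕ) (v : Fin (d + 1) → ℝ) :
    ∃ (R : Matrix (Fin (d + 1)) (Fin (d + 1)) ℝ), Rᵀ * R = 1 ∧
      Rᵀ *ᵥ v = Pi.single 0 (Real.sqrt (v ⬝ᵥ v)) := by
  set D := Real.sqrt (v ⬝ᵥ v) with hD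
  have hDD : D * D = v ⬝ᵥ v := Real.mul_self_sqrt (by simpa using dotProduct_star_self_nonneg v)
  set e : Fin (d + 1) → ℝ := Pi.single 0 D with he
  set w := v - e with hw
  have hee : e ⬝ᵥ e = v ⬝ᵥ v := by simp [he, hDD]
  by_cases h : w ⬝ᵥ w = 0
  · have : w = 0 := by simpa using h
    exact ⟨1, by simp, by simpa using sub_eq_zero.mp this⟩
  have hT : (1 - (2 / (w ⬝ᵥ w)) • vecMulVec w w)ᵀ = (1 - (2 / (w ⬝ᵥ w)) • vecMulVec w w) := by
    simp [transpose_vecMulVec]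
  refine ⟨1 - (2 / (w ⬝ᵥ w)) • vecMulVec w w, ?_, ?_⟩
  · rw [hT]
    have : vecMulVec w w * vecMulVec w w = (w ⬝ᵥ w) • vecMulVec w w := by
      rw [vecMulVec_mul_vecMulVec]
      ext i j; simp [vecMulVec_apply]; ring
    simp only [sub_mul, mul_sub, one_mul, mul_one, smul_mul_assoc, mul_smul_comm, this, smul_smul]
    rw [div_mul_cancel₀ _ h]
    module
  · rw [hT, sub_mulVec, one_mulVec, smul_mulVec, vecMulVec_mulVec]
    have h2 : w ⬝ᵥ w = 2 * (w ⬝ᵥ v) := by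
      simp only [hw, sub_dotProduct, dotProduct_sub, hee, dotProduct_comm v e]; ring
    have : (2 / (w ⬝ᵥ w)) * (w ⬝ᵥ v) = 1 := by
      rw [div_mul_eq_mul_div, ← h2, div_self h]
    rw [show (2 / (w ⬝ᵥ w)) • MulOpposite.op (w ⬝ᵥ v) • w = ((2 / (w ⬝ᵥ w)) * (w ⬝ᵥ v)) • w by
      ext i; simp; ring, this]
    simp [hw]

theorem hw_dot {n : ℕ} (R : Matrix (Fin n) (Fin n) ℝ) (hR : Rᵀ * R = 1) (x : Fin n → ℝ) :
    (Rᵀ *ᵥ x) ⬝ᵥ (Rᵀ *ᵥ x) = x ⬝ᵥ x := by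
  rw [dotProduct_mulVec, vecMul_transpose, mulVec_mulVec, mul_eq_one_comm.mp hR, one_mulVec]

theorem hw_det {n : ℕ} (R : Matrix (Fin n) (Fin n) ℝ) (hR : Rᵀ * R = 1) : |R.det| = 1 := by
  have := congrArg det hR
  rw [det_mul, det_transpose, det_one] at this
  rcases mul_self_eq_one_iff.mp this with h | h <;> simp [h]

theorem hw_vol {n : ℕ} (R : Matrix (Fin n) (Fin n) ℝ) (h : |R.det| = 1) (S : Set (Fin n → ℝ)) :
    volume ((fun x => R *ᵥ x) '' S) = volume S := by
  have := Measure.addHaar_image_linearMap (volume : Measure (Fin n → ℝ)) (Matrix.toLin' R) S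
  rw [LinearMap.det_toLin', h, ENNReal.ofReal_one, one_mul] at this
  exact this

def hw_blk {d : ℕ} (R : Matrix (Fin d) (Fin d) ℝ) : Matrix (Fin (d + 1)) (Fin (d + 1)) ℝ :=
  fun i j => Fin.cases (Fin.cases 1 (fun _ => 0) j : ℝ) (fun i' => Fin.cases 0 (fun j' => R i' j') j) i

theorem hw_main (d : ℕ) : ∀ C : Set (Fin d → ℝ), IsCompact C → Convex ℝ C → C.Nonempty →
    ∃ (R : Matrix (Fin d) (Fin d) ℝ) (a b : Fin d → ℝ), Rᵀ * R = 1 ∧ a ≤ b ∧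
      (∀ x ∈ C, Rᵀ *ᵥ x ∈ Set.Icc a b) ∧ volume (Set.Icc a b) ≤ (Nat.factorial d : ENNReal) * volume C := by
  induction d with
  | zero =>
    rintro C - - ⟨x, hx⟩
    refine ⟨1, 0, 0, by simp, le_rfl, fun x _ => ?_, ?_⟩
    · exact ⟨fun i => i.elim0, fun i => i.elim0⟩
    · have : C = Set.Icc 0 0 := by
        ext y
        exact ⟨fun _ => ⟨fun i => i.elim0, fun i => i.elim0⟩, fun _ => Subsingleton.elim x y ▸ hx⟩
      rw [this]; simp
  | succ d ih =>
    intro C hc hv hn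
    obtain ⟨⟨p, q⟩, ⟨hp, hq⟩, hmax⟩ := (hc.prod hc).exists_isMaxOn (hn.prod hn)
      (f := fun z : (Fin (d + 1) → ℝ) × (Fin (d + 1) → ℝ) => (z.2 - z.1) ⬝ᵥ (z.2 - z.1))
      (by simp only [dotProduct]; fun_prop)
    obtain ⟨R, hR, hRv⟩ := hw_rot d (q - p)
    set D := Real.sqrt ((q - p) ⬝ᵥ (q - p)) with hD
    have hD0 : 0 ≤ D := Real.sqrt_nonneg _
    set f := fun x => Rᵀ *ᵥ x with hf
    have hlin : IsLinearMap ℝ f := ⟨fun x y => mulVec_add _ _ _, fun c x => mulVec_smul _ _ _⟩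
    have hfc : Continuous f := by simp only [hf]; fun_prop
    have hc1 := hc.image hfc
    have hv1 := hv.is_linear_image hlin
    have hvol : volume (f '' C) = volume C := hw_vol _ (by rw [det_transpose, hw_det R hR]) C
    have hfq : f q = f p + Pi.single 0 D := by
      rw [← hRv, mulVec_sub]; simp [hf]
    have hcone := hw_cone' d (f '' C) hc1 hv1 D (f p) hD0 ⟨p, hp, rfl⟩ (hfq ▸ ⟨q, hq, rfl⟩)
    have hwid : ∀ x ∈ C, ∀ y ∈ C, f y 0 - f x 0 ≤ D := by
      intro x hx y hy
      have h1 : (y - x) ⬝ᵥ (y - x) ≤ (q - p) ⬝ᵥ (q - p) := hmax (show (x, y) ∈ C ×ˢ C from ⟨hx, hy⟩)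
      rw [← hw_dot R hR (y - x)] at h1
      have h2 : Rᵀ *ᵥ (y - x) = f y - f x := mulVec_sub _ _ _
      rw [h2] at h1
      apply Real.le_sqrt_of_sq_le
      refine le_trans ?_ h1
      rw [dotProduct, Fin.sum_univ_succ]
      have : 0 ≤ ∑ i : Fin d, (f y - f x) i.succ * (f y - f x) i.succ :=
        Finset.sum_nonneg (fun i _ => mul_self_nonneg _)
      simp only [Pi.sub_apply] at this ⊢
      nlinarith
    have htc : Continuous (Fin.tail : (Fin (d + 1) → ℝ) → (Fin d → ℝ)) := by unfold Fin.tail; fun_prop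
    have htl : IsLinearMap ℝ (Fin.tail : (Fin (d + 1) → ℝ) → (Fin d → ℝ)) :=
      ⟨fun x y => rfl, fun c x => rfl⟩
    obtain ⟨R', a', b', hR', hab', hsub', hvol'⟩ := ih (Fin.tail '' (f '' C)) (hc1.image htc)
      (hv1.is_linear_image htl) ((hn.image _).image _)
    have hB : (hw_blk R')ᵀ * hw_blk R' = 1 := by
      ext i j
      rw [mul_apply, Fin.sum_univ_succ]
      refine Fin.cases ?_ (fun i => ?_) i <;> refine Fin.cases ?_ (fun j => ?_) j
      · simp [hw_blk]
      · simp [hw_blk, one_apply, (Fin.succ_ne_zero _).symm]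
      · simp [hw_blk, one_apply]
      · have := congrFun (congrFun hR' i) j
        rw [mul_apply] at this
        simpa [hw_blk, one_apply] using this
    refine ⟨R * hw_blk R', Fin.cons (f p 0) a', Fin.cons (f p 0 + D) b', ?_, ?_, ?_, ?_⟩
    · rw [transpose_mul, Matrix.mul_assoc, ← Matrix.mul_assoc Rᵀ, hR, Matrix.one_mul, hB]
    · rw [Fin.cons_le_cons]; exact ⟨by linarith, hab'⟩
    · intro x hx
      have h1 := hsub' _ ⟨_, ⟨x, hx, rfl⟩, rfl⟩
      have h2 := hwid p hp x hx
      have h3 := hwid x hx q hq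
      have h4 : f q 0 = f p 0 + D := by rw [hfq]; simp
      have : (R * hw_blk R')ᵀ *ᵥ x = Fin.cons (f x 0) (R'ᵀ *ᵥ Fin.tail (f x)) := by
        rw [transpose_mul, ← mulVec_mulVec]
        change (hw_blk R')ᵀ *ᵥ f x = _
        ext i
        rw [mulVec, dotProduct, Fin.sum_univ_succ]
        refine Fin.cases ?_ (fun i => ?_) i
        · simp [hw_blk]
        · simp [hw_blk, mulVec, dotProduct, Fin.tail]
      rw [this, Set.mem_Icc, Fin.cons_le_cons, Fin.cons_le_cons]
      exact ⟨⟨by linarith, h1.1⟩, ⟨by linarith, h1.2⟩⟩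
    · rw [← hvol]
      rw [Real.volume_Icc_pi, Fin.prod_univ_succ]
      simp only [Fin.cons_zero, Fin.cons_succ, add_sub_cancel_left]
      rw [← Real.volume_Icc_pi]
      calc ENNReal.ofReal D * volume (Set.Icc a' b')
          ≤ ENNReal.ofReal D * ((Nat.factorial d : ENNReal) * volume (Fin.tail '' (f '' C))) := by gcongr
        _ = (Nat.factorial d : ENNReal) * (ENNReal.ofReal D * volume (Fin.tail '' (f '' C))) := by ring
        _ ≤ (Nat.factorial d : ENNReal) * (((d + 1 : ℕ) : ENNReal) * volume (f '' C)) := by gcongr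
        _ = _ := by rw [Nat.factorial_succ]; push_cast; ring

theorem hw_fin {d : ℕ} (R : Matrix (Fin d) (Fin d) ℝ) (a b : Fin d → ℝ) (C : Set (Fin d → ℝ))
    (hR : Rᵀ * R = 1) (hdet : R.det = 1) (hab : a ≤ b)
      (hsub : ∀ x ∈ C, Rᵀ *ᵥ x ∈ Set.Icc a b)
      (hvol : volume (Set.Icc a b) ≤ (Nat.factorial d : ENNReal) * volume C) :
    ∃ P : Set (Fin d → ℝ), IsHyperrectangle P ∧ C ⊆ P ∧
      volume P ≤ (Nat.factorial d : ENNReal) * volume C := by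
  refine ⟨_, ⟨R, 0, a, b, hR, hdet, hab, rfl⟩, ?_, ?_⟩
  · intro x hx
    refine ⟨_, hsub x hx, ?_⟩
    simp [mulVec_mulVec, mul_eq_one_comm.mp hR]
  · simp only [add_zero]
    rw [hw_vol R (by simp [hdet])]
    exact hvol

/-- **Hadwiger.** Every convex body `𝒞 ⊆ ℝ^d` is covered by a hyperrectangle
`P` with `Vol(P) ≤ d! · Vol(𝒞)`. -/
theorem hadwiger_covering_hyperrectangle
    (d : ℕ) (hd : 1 ≤ d) (𝒞 : Set (Fin d → ℝ))
    (hcomp : IsCompact 𝒞) (hconv : Convex ℝ 𝒞) :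
    ∃ P : Set (Fin d → ℝ), IsHyperrectangle P ∧ 𝒞 ⊆ P ∧
      volume P ≤ (Nat.factorial d : ENNReal) * volume 𝒞 := by
  obtain ⟨n, rfl⟩ : ∃ n, d = n + 1 := ⟨d - 1, by omega⟩
  rcases 𝒞.eq_empty_or_nonempty with rfl | hne
  · exact hw_fin 1 0 0 ∅ (by simp) (by simp) le_rfl (by simp) (by simp)
  obtain ⟨R, a, b, hR, hab, hsub, hvol⟩ := hw_main _ 𝒞 hcomp hconv hne
  rcases eq_or_eq_neg_of_abs_eq (hw_det R hR) with h | h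
  · exact hw_fin R a b 𝒞 hR h hab hsub hvol
  set F : Matrix (Fin (n + 1)) (Fin (n + 1)) ℝ := diagonal (Fin.cons (-1) (fun _ => 1)) with hF
  have hFF : Fᵀ * F = 1 := by
    rw [hF, diagonal_transpose, diagonal_mul_diagonal, ← diagonal_one]
    congr 1; ext i
    refine Fin.cases ?_ (fun i => ?_) i <;> simp
  refine hw_fin (R * F) (Fin.cons (- b 0) (Fin.tail a)) (Fin.cons (- a 0) (Fin.tail b)) 𝒞 ?_ ?_ ?_ ?_ ?_
  · rw [transpose_mul, Matrix.mul_assoc, ← Matrix.mul_assoc Rᵀ, hR, Matrix.one_mul, hFF]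
  · rw [det_mul, h, hF, det_diagonal, Fin.prod_univ_succ]; simp
  · rw [Fin.cons_le_cons]; exact ⟨neg_le_neg (hab 0), fun i => hab i.succ⟩
  · intro x hx
    obtain ⟨h1, h2⟩ := hsub x hx
    have : (R * F)ᵀ *ᵥ x = Fin.cons (-((Rᵀ *ᵥ x) 0)) (Fin.tail (Rᵀ *ᵥ x)) := by
      rw [transpose_mul, ← mulVec_mulVec, hF, diagonal_transpose]
      ext i
      rw [mulVec_diagonal]
      refine Fin.cases ?_ (fun i => ?_) i <;> simp [Fin.tail]
    rw [this, Set.mem_Icc, Fin.cons_le_cons, Fin.cons_le_cons]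
    exact ⟨⟨neg_le_neg (h2 0), fun i => h1 i.succ⟩, ⟨neg_le_neg (h1 0), fun i => h2 i.succ⟩⟩
  · refine le_trans (le_of_eq ?_) hvol
    rw [Real.volume_Icc_pi, Real.volume_Icc_pi, Fin.prod_univ_succ, Fin.prod_univ_succ]
    simp only [Fin.cons_zero, Fin.cons_succ, Fin.tail]
    congr 2; ring
end

section
/- Let d ≥ 1 and set d̃ = d(d−1)/2 and C(d) = 2^{d(d̃+2)}·d^d. For all sufficiently large N ∈ ℕ and every v with 1/N ≤ v ≤ 1, there exists a finite family 𝔔̄ of at most N^{3d²} rotated hyperrectangles in ℝ^d, each of the form R·S·[−1,1]^d + t with R a rotation matrix, S a positive diagonal matrix, and t ∈ [0,1]^d, each of d-dimensional volume exactly v, such that every convex body 𝒞 ⊆ [0,1]^d with Vol(𝒞) ≥ C(d)·v contains at least one member of 𝔔̄ as a subset. -/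
open MeasureTheory Matrix

theorem geo (n : ℕ) : ∀ (E : Type) [NormedAddCommGroup E] [InnerProductSpace ℝ E]
    [FiniteDimensional ℝ E], Module.finrank ℝ E = n → ∀ K : Set E, IsCompact K → Convex ℝ K →
    K.Nonempty → ∃ (b : Fin n → E) (l : Fin n → ℝ) (t : E), Orthonormal ℝ b ∧
      (∀ i, 0 ≤ l i) ∧ (∀ x ∈ K, ∀ y ∈ K, ∀ i, inner ℝ (b i) (x - y) ≤ l i) ∧
      ∀ x, (∀ i, |inner ℝ (b i) (x - t)| ≤ l i / 4 ^ ((i : ℕ) + 1)) → x ∈ K := by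
  induction n with
  | zero =>
    intro E _ _ _ h0 K _ _ hne
    obtain ⟨p, hp⟩ := hne
    have := Module.finrank_zero_iff.mp h0
    refine ⟨Fin.elim0, Fin.elim0, p, ⟨fun i => i.elim0, fun i => i.elim0⟩, fun i => i.elim0,
      fun _ _ _ _ i => i.elim0, fun x _ => ?_⟩
    rwa [Subsingleton.elim x p]
  | succ n ih =>
    intro E _ _ _ hn K hK hconv hne
    have hfact : Fact (Module.finrank ℝ E = n + 1) := ⟨hn⟩
    have hnt : Nontrivial E := Module.nontrivial_of_finrank_pos (R := ℝ) (by omega)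
    obtain ⟨⟨p, q⟩, ⟨hp, hq⟩, hmax⟩ := (hK.prod hK).exists_isMaxOn (hne.prod hne)
      (f := fun z : E × E => ‖z.2 - z.1‖) (by fun_prop)
    have hmax' : ∀ x ∈ K, ∀ y ∈ K, ‖x - y‖ ≤ ‖q - p‖ := fun x hx y hy =>
      hmax (show (y, x) ∈ K ×ˢ K from ⟨hy, hx⟩)
    simp only at hp hq
    obtain ⟨u, hu, hqp⟩ : ∃ u : E, ‖u‖ = 1 ∧ q - p = ‖q - p‖ • u := by
      by_cases h : q - p = 0
      · obtain ⟨u, hu⟩ := exists_norm_eq E zero_le_one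
        exact ⟨u, hu, by simp [h]⟩
      · have h' : ‖q - p‖ ≠ 0 := norm_ne_zero_iff.mpr h
        refine ⟨‖q - p‖⁻¹ • (q - p), ?_, ?_⟩
        · rw [norm_smul, norm_inv, norm_norm, inv_mul_cancel₀ h']
        · rw [smul_smul, mul_inv_cancel₀ h', one_smul]
    set L := ‖q - p‖ with hL
    have hL0 : 0 ≤ L := norm_nonneg _
    have hu0 : u ≠ 0 := by
      intro h; simp [h] at hu
    have huu : inner ℝ u u = (1 : ℝ) := by rw [real_inner_self_eq_norm_sq, hu]; norm_num
    let W : Submodule ℝ E := (ℝ ∙ u)ᗮ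
    let π : E →L[ℝ] W := W.orthogonalProjectionOnto
    have hW : Module.finrank ℝ W = n := Submodule.finrank_orthogonal_span_singleton hu0
    obtain ⟨b, l, t, hb, hl, hout, hin⟩ := ih W hW (π '' K) (hK.image π.continuous)
      (hconv.linear_image π.toLinearMap) (hne.image _)
    have hbu : ∀ w : W, inner ℝ u (w : E) = 0 := fun w =>
      Submodule.mem_orthogonal_singleton_iff_inner_right.mp w.2
    have hπ : ∀ (w : W) (x : E), inner ℝ (w : E) x = inner ℝ w (π x) := by
      intro w x
      exact (Submodule.inner_orthogonalProjectionOnto_eq_of_mem_left w x).symm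
    have hπw : ∀ w : W, π (w : E) = w := fun w =>
      Submodule.orthogonalProjectionOnto_mem_subspace_eq_self w
    have hπ0 : ∀ x, π x = 0 → ∃ a : ℝ, x = a • u := by
      intro x hx
      have : x ∈ Wᗮ := by
        rwa [← Submodule.orthogonalProjectionOnto_eq_zero_iff]
      rw [Submodule.orthogonal_orthogonal, Submodule.mem_span_singleton] at this
      obtain ⟨a, ha⟩ := this
      exact ⟨a, ha.symm⟩
    have hπu : π u = 0 := by
      rw [Submodule.orthogonalProjectionOnto_eq_zero_iff, Submodule.orthogonal_orthogonal]
      exact Submodule.mem_span_singleton_self u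
    have houtu : ∀ x ∈ K, ∀ y ∈ K, inner ℝ u (x - y) ≤ L := by
      intro x hx y hy
      calc inner ℝ u (x - y) ≤ ‖u‖ * ‖x - y‖ := real_inner_le_norm _ _
        _ ≤ L := by rw [hu, one_mul]; exact hmax' x hx y hy
    let T : E := (1/4 : ℝ) • (t : E) + (3/4 : ℝ) • ((π p : W) : E) + (inner ℝ u p + L / 2) • u
    have hπT : π T = (1/4 : ℝ) • t + (3/4 : ℝ) • π p := by
      simp only [T, map_add, map_smul, hπu, smul_zero, add_zero, hπw]
    have huT : inner ℝ u T = inner ℝ u p + L / 2 := by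
      simp only [T, inner_add_right, inner_smul_right, hbu, huu]
      ring
    refine ⟨Fin.cons u (fun i => (b i : E)), Fin.cons L l, T, ?_, ?_, ?_, ?_⟩
    · constructor
      · intro i
        refine Fin.cases ?_ (fun i => ?_) i
        · simpa using hu
        · simpa using hb.1 i
      · intro i j
        refine Fin.cases ?_ (fun i => ?_) i <;> refine Fin.cases ?_ (fun j => ?_) j
        · intro h; exact absurd rfl h
        · intro _; simpa using hbu (b j)
        · intro _; simpa [real_inner_comm] using hbu (b i)
        · intro h
          have := hb.2 (i := i) (j := j) (by rintro rfl; exact h rfl)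
          simpa using this
    · intro i
      refine Fin.cases ?_ (fun i => ?_) i
      · simpa using hL0
      · simpa using hl i
    · intro x hx y hy i
      refine Fin.cases ?_ (fun i => ?_) i
      · simpa using houtu x hx y hy
      · have := hout _ (Set.mem_image_of_mem π hx) _ (Set.mem_image_of_mem π hy) i
        simp only [Fin.cons_succ]
        rw [hπ, map_sub]
        exact this
    · intro x hx
      have hx0 := hx 0
      simp only [Fin.cons_zero, Fin.val_zero, zero_add, pow_one, inner_sub_right, huT] at hx0
      have hy : (4 : ℝ) • π x - (3 : ℝ) • π p ∈ π '' K := by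
        apply hin
        intro i
        have h := hx i.succ
        simp only [Fin.cons_succ, Fin.val_succ] at h
        rw [hπ, map_sub, hπT] at h
        have e : (4 : ℝ) • π x - (3 : ℝ) • π p - t
            = (4 : ℝ) • (π x - ((1/4 : ℝ) • t + (3/4 : ℝ) • π p)) := by module
        rw [e, inner_smul_right, abs_mul, abs_of_pos (by norm_num : (0:ℝ) < 4)]
        rw [pow_succ, ← div_div] at h
        linarith
      obtain ⟨z, hz, hzx⟩ := hy
      obtain ⟨a, ha⟩ := hπ0 (x - (1/4 : ℝ) • z - (3/4 : ℝ) • p) (by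
        simp only [map_sub, map_smul, hzx]; module)
      have h1 : inner ℝ u x - 1/4 * inner ℝ u z - 3/4 * inner ℝ u p = a := by
        have := congrArg (fun w => inner ℝ u w) ha
        simpa only [inner_sub_right, inner_smul_right, huu, mul_one] using this
      have h2 : inner ℝ u q - inner ℝ u p = L := by
        have := congrArg (fun w => inner ℝ u w) hqp
        simpa only [inner_sub_right, inner_smul_right, huu, mul_one] using this
      have h3 := houtu z hz p hp
      have h4 := houtu q hq z hz
      rw [inner_sub_right] at h3 h4
      rw [abs_le] at hx0
      have ha0 : 0 ≤ a := by linarith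
      have ha1 : a ≤ 3/4 * L := by linarith
      obtain ⟨s, hs0, hs1, hsa⟩ : ∃ s : ℝ, 0 ≤ s ∧ s ≤ 1 ∧ a = 3/4 * (s * L) := by
        rcases hL0.eq_or_lt with h | h
        · exact ⟨0, le_rfl, zero_le_one, by rw [← h] at ha1 ⊢; linarith⟩
        · refine ⟨a / (3/4 * L), by positivity, ?_, by field_simp⟩
          rw [div_le_one (by positivity)]; exact ha1
      have hm : p + s • (q - p) ∈ K := by
        have := hconv hp hq (sub_nonneg.mpr hs1) hs0 (by ring)
        convert this using 1
        module
      have := hconv hz hm (by norm_num : (0:ℝ) ≤ 1/4) (by norm_num : (0:ℝ) ≤ 3/4) (by norm_num)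
      convert this using 1
      rw [hqp, smul_smul]
      have : x = (1/4 : ℝ) • z + (3/4 : ℝ) • p + a • u := by rw [← ha]; module
      rw [this, hsa]
      module

theorem geo_matrix (d : ℕ) (hd : 1 ≤ d) (K : Set (Fin d → ℝ)) (hK : IsCompact K)
    (hc : Convex ℝ K) (hne : K.Nonempty) :
    ∃ (R : Matrix (Fin d) (Fin d) ℝ) (l t : Fin d → ℝ), Rᵀ * R = 1 ∧ R.det = 1 ∧
      (∀ i, 0 ≤ l i) ∧ (∀ x ∈ K, ∀ y ∈ K, ∀ i, |(Rᵀ *ᵥ (x - y)) i| ≤ l i) ∧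
      ∀ x, (∀ i, |(Rᵀ *ᵥ (x - t)) i| ≤ l i / 4 ^ ((i : ℕ) + 1)) → x ∈ K := by
  let e : (Fin d → ℝ) ≃L[ℝ] EuclideanSpace ℝ (Fin d) := (EuclideanSpace.equiv (Fin d) ℝ).symm
  obtain ⟨b, l, t, hb, hl, hout, hin⟩ := geo d (EuclideanSpace ℝ (Fin d)) (by simp) (e '' K)
    (hK.image e.continuous) (hc.linear_image e.toLinearEquiv.toLinearMap) (hne.image _)
  let R0 : Matrix (Fin d) (Fin d) ℝ := Matrix.of fun j i => b i j
  have hR0 : R0ᵀ * R0 = 1 := by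
    ext i k
    have h := orthonormal_iff_ite.mp hb i k
    rw [Matrix.mul_apply, Matrix.one_apply, ← h, PiLp.inner_apply]
    refine Finset.sum_congr rfl fun j _ => ?_
    simp [R0, mul_comm]
  have hR0v : ∀ (z : Fin d → ℝ) i, (R0ᵀ *ᵥ z) i = inner ℝ (b i) (e z) := by
    intro z i
    rw [PiLp.inner_apply]
    simp only [Matrix.mulVec, dotProduct]
    refine Finset.sum_congr rfl fun j _ => ?_
    simp [R0, e, mul_comm]
  have hdet : R0.det * R0.det = 1 := by
    have := congrArg Matrix.det hR0
    simpa using this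
  let i0 : Fin d := ⟨0, hd⟩
  let δ : Fin d → ℝ := Function.update 1 i0 R0.det
  have hδ2 : ∀ i, δ i * δ i = 1 := by
    intro i
    by_cases h : i = i0
    · subst h; simpa [δ] using hdet
    · simp [δ, h]
  have hδ : ∀ i, |δ i| = 1 := by
    intro i
    have := hδ2 i
    rw [← abs_mul_abs_self] at this
    nlinarith [abs_nonneg (δ i)]
  have hprod : ∏ i, δ i = R0.det := by
    rw [Finset.prod_eq_single i0]
    · simp [δ]
    · intro i _ h; simp [δ, h]
    · simp
  have hRv : ∀ (z : Fin d → ℝ) i, |((R0 * Matrix.diagonal δ)ᵀ *ᵥ z) i| = |(R0ᵀ *ᵥ z) i| := by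
    intro z i
    rw [Matrix.transpose_mul, ← Matrix.mulVec_mulVec, Matrix.diagonal_transpose,
      Matrix.mulVec_diagonal, abs_mul, hδ, one_mul]
  refine ⟨R0 * Matrix.diagonal δ, l, e.symm t, ?_, ?_, hl, ?_, ?_⟩
  · rw [Matrix.transpose_mul, Matrix.mul_assoc, ← Matrix.mul_assoc _ R0, hR0, Matrix.one_mul,
      Matrix.diagonal_transpose, Matrix.diagonal_mul_diagonal]
    simp [hδ2]
  · rw [Matrix.det_mul, Matrix.det_diagonal, hprod, hdet]
  · intro x hx y hy i
    rw [hRv, hR0v, map_sub, abs_le]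
    have h1 := hout _ (Set.mem_image_of_mem e hx) _ (Set.mem_image_of_mem e hy) i
    have h2 := hout _ (Set.mem_image_of_mem e hy) _ (Set.mem_image_of_mem e hx) i
    rw [inner_sub_right] at h1 h2 ⊢
    constructor <;> linarith
  · intro x hx
    have : e x ∈ e '' K := by
      apply hin
      intro i
      have := hx i
      rwa [hRv, hR0v, map_sub, e.apply_symm_apply] at this
    obtain ⟨y, hy, hxy⟩ := this
    rwa [← e.injective hxy]

theorem grid_net {α ι : Type} [Fintype ι] (P : Set α) (φ : α → ι → ℝ) (L : ℕ) (ε : ℝ)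
    (hε : 0 < ε) (hb : ∀ p ∈ P, ∀ i, |φ p i| ≤ L * ε) :
    ∃ F : Finset α, (∀ p ∈ F, p ∈ P) ∧ F.card ≤ (2 * L + 1) ^ Fintype.card ι ∧
      ∀ p ∈ P, ∃ p' ∈ F, ∀ i, |φ p' i - φ p i| ≤ ε := by
  classical
  let cell : α → ι → ℤ := fun p i => ⌊φ p i / ε⌋
  let G : Finset (ι → ℤ) := Fintype.piFinset fun _ => Finset.Icc (-(L : ℤ)) L
  have hcell : ∀ p ∈ P, cell p ∈ G := by
    intro p hp
    rw [Fintype.mem_piFinset]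
    intro i
    have h := abs_le.mp (hb p hp i)
    rw [Finset.mem_Icc]
    constructor
    · rw [Int.le_floor, le_div_iff₀ hε]; push_cast; linarith
    · have : φ p i / ε ≤ L := by rw [div_le_iff₀ hε]; exact h.2
      exact_mod_cast (Int.floor_le _).trans this
  let G' := G.filter fun k => ∃ p ∈ P, cell p = k
  have hG' : ∀ k : G', ∃ p ∈ P, cell p = k := fun k => (Finset.mem_filter.mp k.2).2
  choose g hgP hg using hG'
  refine ⟨Finset.univ.image g, ?_, ?_, ?_⟩
  · intro p hp
    obtain ⟨k, -, rfl⟩ := Finset.mem_image.mp hp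
    exact hgP k
  · refine Finset.card_image_le.trans ?_
    rw [Finset.card_univ, Fintype.card_coe]
    refine (Finset.card_filter_le _ _).trans ?_
    rw [Fintype.card_piFinset]
    simp only [Int.card_Icc, Finset.prod_const, Finset.card_univ]
    apply le_of_eq
    congr 1
    omega
  · intro p hp
    have hk : cell p ∈ G' := Finset.mem_filter.mpr ⟨hcell p hp, p, hp, rfl⟩
    refine ⟨g ⟨_, hk⟩, Finset.mem_image_of_mem _ (Finset.mem_univ _), fun i => ?_⟩
    have h : ⌊φ (g ⟨_, hk⟩) i / ε⌋ = ⌊φ p i / ε⌋ := congrFun (hg ⟨_, hk⟩) i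
    have h2 := (Int.abs_sub_lt_one_of_floor_eq_floor h).le
    rw [← sub_div, abs_div, abs_of_pos hε, div_le_one hε] at h2
    exact h2

abbrev Par (d : ℕ) : Type := Matrix (Fin d) (Fin d) ℝ × (Fin d → ℝ) × (Fin d → ℝ)

def parSet (d : ℕ) (v : ℝ) : Set (Par d) :=
  {p | p.1ᵀ * p.1 = 1 ∧ p.1.det = 1 ∧ (∀ i, 0 < p.2.1 i) ∧ (∀ i, p.2.1 i ≤ d) ∧
    p.2.2 ∈ Set.Icc (0 : Fin d → ℝ) 1 ∧ ∏ i, (2 * p.2.1 i) = v}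

theorem orth_entry_le {d : ℕ} {R : Matrix (Fin d) (Fin d) ℝ} (h : Rᵀ * R = 1) (j i : Fin d) :
    |R j i| ≤ 1 := by
  have h1 := congrFun (congrFun h i) i
  rw [Matrix.mul_apply, Matrix.one_apply_eq] at h1
  have h2 : Rᵀ i j * R j i ≤ 1 := by
    rw [← h1]
    exact Finset.single_le_sum (f := fun j => Rᵀ i j * R j i)
      (fun j _ => mul_self_nonneg (R j i)) (Finset.mem_univ j)
  rw [Matrix.transpose_apply] at h2
  exact abs_le_one_iff_mul_self_le_one.mpr h2

theorem par_net (d : ℕ) (hd : 1 ≤ d) (v : ℝ) (L : ℕ) (ε : ℝ) (hε : 0 < ε)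
    (hL : (d : ℝ) ≤ L * ε) :
    ∃ F : Finset (Par d), (∀ p ∈ F, p ∈ parSet d v) ∧
      F.card ≤ (2 * L + 1) ^ (3 * d ^ 2 - 1) ∧
      ∀ p ∈ parSet d v, ∃ p' ∈ F, (∀ i j, |p'.1 i j - p.1 i j| ≤ ε) ∧
        (∀ i, |p'.2.1 i - p.2.1 i| ≤ ε) ∧ (∀ i, |p'.2.2 i - p.2.2 i| ≤ ε) := by
  have hd1 : (1 : ℝ) ≤ d := by exact_mod_cast hd
  have ht : ∀ p ∈ parSet d v, ∀ i, |p.2.2 i| ≤ L * ε := by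
    intro p hp i
    have h0 := hp.2.2.2.2.1.1 i
    have h1 := hp.2.2.2.2.1.2 i
    simp only [Pi.zero_apply, Pi.one_apply] at h0 h1
    rw [abs_of_nonneg h0]; linarith
  rcases hd.eq_or_lt with rfl | h2
  · obtain ⟨F, hF, hcard, hnet⟩ := grid_net (parSet 1 v) (fun p => p.2.2) L ε hε ht
    refine ⟨F, hF, hcard.trans (Nat.pow_le_pow_right (by omega) (by simp)), ?_⟩
    intro p hp
    obtain ⟨p', hp', h⟩ := hnet p hp
    have hp'' := hF p' hp'
    refine ⟨p', hp', ?_, ?_, h⟩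
    · intro i j
      have e1 := hp.2.1
      have e2 := hp''.2.1
      rw [Matrix.det_fin_one] at e1 e2
      rw [Subsingleton.elim i 0, Subsingleton.elim j 0, e1, e2]
      simpa using hε.le
    · intro i
      have e1 := hp.2.2.2.2.2
      have e2 := hp''.2.2.2.2.2
      simp only [Finset.univ_unique, Fin.default_eq_zero, Finset.prod_singleton] at e1 e2
      rw [Subsingleton.elim i 0, show p'.2.1 0 = p.2.1 0 by linarith]
      simpa using hε.le
  · obtain ⟨F, hF, hcard, hnet⟩ := grid_net (ι := (Fin d × Fin d) ⊕ (Fin d ⊕ Fin d)) (parSet d v)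
      (fun p => Sum.elim (fun ij => p.1 ij.1 ij.2) (Sum.elim p.2.1 p.2.2)) L ε hε (by
        rintro p hp (⟨i, j⟩ | i | i)
        · exact (orth_entry_le hp.1 i j).trans (by linarith)
        · simp only [Sum.elim_inr, Sum.elim_inl]
          rw [abs_of_pos (hp.2.2.1 i)]
          exact (hp.2.2.2.1 i).trans hL
        · exact ht p hp i)
    refine ⟨F, hF, hcard.trans (Nat.pow_le_pow_right (by omega) ?_), ?_⟩
    · simp only [Fintype.card_sum, Fintype.card_prod, Fintype.card_fin]
      apply Nat.le_sub_one_of_lt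
      nlinarith
    · intro p hp
      obtain ⟨p', hp', h⟩ := hnet p hp
      exact ⟨p', hp', fun i j => h (Sum.inl (i, j)), fun i => h (Sum.inr (Sum.inl i)),
        fun i => h (Sum.inr (Sum.inr i))⟩

def rbox {d : ℕ} (p : Par d) : Set (Fin d → ℝ) :=
  (fun x => p.1.mulVec (fun i => p.2.1 i * x i) + p.2.2) '' Set.Icc (-1 : Fin d → ℝ) 1

theorem volume_rbox {d : ℕ} {v : ℝ} {p : Par d} (hp : p ∈ parSet d v) :
    volume (rbox p) = ENNReal.ofReal v := by
  obtain ⟨R, s, t⟩ := p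
  obtain ⟨h1, h2, h3, h4, h5, h6⟩ := hp
  simp only at h1 h2 h3 h4 h5 h6
  have e : rbox (R, s, t) = (fun x => x + t) ''
      (Matrix.toLin' (R * Matrix.diagonal s) '' Set.Icc (-1 : Fin d → ℝ) 1) := by
    rw [Set.image_image]
    refine Set.image_congr fun x _ => ?_
    simp only [Matrix.toLin'_apply, ← Matrix.mulVec_mulVec]
    congr 2
    ext i
    rw [Matrix.mulVec_diagonal]
  rw [e, Set.image_add_right, measure_preimage_add_right, Measure.addHaar_image_linearMap,
    LinearMap.det_toLin', Matrix.det_mul, h2, one_mul, Matrix.det_diagonal, Real.volume_Icc_pi,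
    abs_of_nonneg (Finset.prod_nonneg fun i _ => (h3 i).le), ← h6,
    ← ENNReal.ofReal_prod_of_nonneg (by intro i _; norm_num),
    ← ENNReal.ofReal_mul (Finset.prod_nonneg fun i _ => (h3 i).le), ← Finset.prod_mul_distrib]
  congr 1
  refine Finset.prod_congr rfl fun i _ => ?_
  simp only [Pi.one_apply, Pi.neg_apply]
  ring

theorem rbox_close {d : ℕ} (hd : 1 ≤ d) {v ε : ℝ} {p p' : Par d} (hε : 0 < ε)
    (hp : p ∈ parSet d v) (hp' : p' ∈ parSet d v)
    (hR : ∀ i j, |p'.1 i j - p.1 i j| ≤ ε) (hs : ∀ i, |p'.2.1 i - p.2.1 i| ≤ ε)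
    (ht : ∀ i, |p'.2.2 i - p.2.2 i| ≤ ε) (x : Fin d → ℝ) (hx : x ∈ rbox p') (i : Fin d) :
    |(p.1ᵀ *ᵥ (x - p.2.2)) i| ≤ p.2.1 i + 3 * d ^ 3 * ε := by
  obtain ⟨y, hy, rfl⟩ := hx
  have hd1 : (1 : ℝ) ≤ d := by exact_mod_cast hd
  have hy1 : ∀ j, |y j| ≤ 1 := fun j => abs_le.mpr ⟨hy.1 j, hy.2 j⟩
  set w : Fin d → ℝ := fun i => p'.2.1 i * y i with hw
  have e : p.1ᵀ *ᵥ (p'.1 *ᵥ w + p'.2.2 - p.2.2)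
      = w + p.1ᵀ *ᵥ ((p'.1 - p.1) *ᵥ w + (p'.2.2 - p.2.2)) := by
    have : w = p.1ᵀ *ᵥ (p.1 *ᵥ w) := by rw [Matrix.mulVec_mulVec, hp.1, Matrix.one_mulVec]
    nth_rw 2 [this]
    rw [← Matrix.mulVec_add]
    congr 1
    rw [Matrix.sub_mulVec]
    abel
  have hwj : ∀ j, |w j| ≤ d := by
    intro j
    rw [hw]; simp only [abs_mul, abs_of_pos (hp'.2.2.1 j)]
    calc p'.2.1 j * |y j| ≤ p'.2.1 j * 1 := by gcongr; exacts [(hp'.2.2.1 j).le, hy1 j]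
      _ ≤ d := by rw [mul_one]; exact hp'.2.2.2.1 j
  have hwi : |w i| ≤ p.2.1 i + ε := by
    rw [hw]; simp only [abs_mul, abs_of_pos (hp'.2.2.1 i)]
    calc p'.2.1 i * |y i| ≤ p'.2.1 i * 1 := by gcongr; exacts [(hp'.2.2.1 i).le, hy1 i]
      _ ≤ _ := by linarith [(abs_le.mp (hs i)).2]
  have hz : ∀ j, |((p'.1 - p.1) *ᵥ w + (p'.2.2 - p.2.2)) j| ≤ d * (ε * d) + ε := by
    intro j
    rw [Pi.add_apply]
    refine (abs_add_le _ _).trans (add_le_add ?_ (ht j))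
    simp only [Matrix.mulVec, dotProduct]
    refine (Finset.abs_sum_le_sum_abs _ _).trans ?_
    calc ∑ k, |(p'.1 - p.1) j k * w k| ≤ ∑ k : Fin d, ε * d := by
          refine Finset.sum_le_sum fun k _ => ?_
          rw [abs_mul]
          exact mul_le_mul (hR j k) (hwj k) (abs_nonneg _) hε.le
      _ = d * (ε * d) := by simp
  have hq : |(p.1ᵀ *ᵥ ((p'.1 - p.1) *ᵥ w + (p'.2.2 - p.2.2))) i| ≤ d * (d * (ε * d) + ε) := by
    rw [Matrix.mulVec, dotProduct]
    refine (Finset.abs_sum_le_sum_abs _ _).trans ?_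
    calc _ ≤ ∑ k : Fin d, (d * (ε * d) + ε) := by
          refine Finset.sum_le_sum fun k _ => ?_
          rw [abs_mul]
          have := mul_le_mul (orth_entry_le hp.1 k i) (hz k) (abs_nonneg _) zero_le_one
          rwa [one_mul] at this
      _ = _ := by simp; ring
  show |(p.1ᵀ *ᵥ (p'.1 *ᵥ w + p'.2.2 - p.2.2)) i| ≤ _
  rw [e, Pi.add_apply]
  refine (abs_add_le _ _).trans ?_
  have h1 : ε ≤ d ^ 3 * ε := le_mul_of_one_le_left hε.le (one_le_pow₀ hd1)
  have h2 : d * ε ≤ d ^ 3 * ε := by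
    gcongr
    exact le_self_pow₀ hd1 (by norm_num)
  linarith

theorem volume_le_of_rot {d : ℕ} {R : Matrix (Fin d) (Fin d) ℝ} (hR : R.det = 1)
    (l : Fin d → ℝ) (hl : ∀ i, 0 ≤ l i) (K : Set (Fin d → ℝ))
    (h : ∀ x ∈ K, ∀ y ∈ K, ∀ i, |(Rᵀ *ᵥ (x - y)) i| ≤ l i) :
    volume K ≤ ENNReal.ofReal (∏ i, l i) := by
  have e := Measure.addHaar_image_linearMap volume (Matrix.toLin' Rᵀ) K
  rw [LinearMap.det_toLin', Matrix.det_transpose, hR, abs_one, ENNReal.ofReal_one, one_mul] at e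
  rw [← e, ENNReal.ofReal_prod_of_nonneg fun i _ => hl i]
  refine (Real.volume_pi_le_prod_diam _).trans ?_
  refine Finset.prod_le_prod' fun i _ => ?_
  refine Metric.ediam_le ?_
  rintro _ ⟨_, ⟨x, hx, rfl⟩, rfl⟩ _ ⟨_, ⟨y, hy, rfl⟩, rfl⟩
  rw [edist_dist]
  apply ENNReal.ofReal_le_ofReal
  have := h x hx y hy i
  rw [Matrix.mulVec_sub] at this
  exact this

theorem prod_four (d : ℕ) : ∏ i : Fin d, (4 : ℝ) ^ ((i : ℕ) + 1) = 2 ^ (d * (d + 1)) := by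
  induction d with
  | zero => simp
  | succ n ih =>
    rw [Fin.prod_univ_castSucc]
    simp only [Fin.val_castSucc, Fin.val_last]
    rw [ih, show (4 : ℝ) = 2 ^ 2 by norm_num, ← pow_mul, ← pow_add]
    congr 1
    ring

theorem const_le (d : ℕ) (hd : 1 ≤ d) :
    2 ^ (d * (d + 1)) ≤ 2 ^ (d * (d * (d - 1) / 2 + 2)) * d ^ d := by
  refine le_trans ?_ (Nat.le_mul_of_pos_right _ (Nat.pow_pos hd))
  apply Nat.pow_le_pow_right (by norm_num)
  apply Nat.mul_le_mul_left
  obtain ⟨k, rfl⟩ : ∃ k, d = k + 1 := ⟨d - 1, by omega⟩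
  simp only [Nat.add_sub_cancel]
  have : k ≤ (k + 1) * k / 2 := by
    rw [Nat.le_div_iff_mul_le (by norm_num)]
    rcases Nat.eq_zero_or_pos k with rfl | h
    · simp
    · nlinarith
  omega

/-- **Discretization.** For `d ≥ 1`, `d̃ = d(d−1)/2`, `C(d) = 2^{d(d̃+2)} d^d`,
for all sufficiently large `N` and every volume `v` with `1/N ≤ v ≤ 1`, there is a family
`𝔔̄` of at most `N^{3d²}` rotated hyperrectangles `R·S·[−1,1]^d + t` (with `R ∈ SO(d)`,
`S` positive diagonal, `t ∈ [0,1]^d`), each of volume exactly `v`, such that every convex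
body `𝒞 ⊆ [0,1]^d` with `Vol(𝒞) ≥ C(d)·v` contains a member of `𝔔̄`. -/
theorem discretization_rotated_hyperrectangles (d : ℕ) (hd : 1 ≤ d) :
    ∃ N₀ : ℕ, ∀ N : ℕ, N₀ ≤ N → ∀ v : ℝ, 1 / (N : ℝ) ≤ v → v ≤ 1 →
      ∃ 𝔔 : Finset (Set (Fin d → ℝ)),
        𝔔.card ≤ N ^ (3 * d ^ 2) ∧
        (∀ B ∈ 𝔔,
          (∃ (R : Matrix (Fin d) (Fin d) ℝ) (s t : Fin d → ℝ),
            Rᵀ * R = 1 ∧ R.det = 1 ∧ (∀ i, 0 < s i) ∧ t ∈ Set.Icc (0 : Fin d → ℝ) 1 ∧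
            B = (fun x => R.mulVec (fun i => s i * x i) + t) ''
              Set.Icc (-1 : Fin d → ℝ) 1) ∧
          volume B = ENNReal.ofReal v) ∧
        ∀ 𝒞 : Set (Fin d → ℝ), 𝒞 ⊆ Set.Icc 0 1 → IsCompact 𝒞 → Convex ℝ 𝒞 →
          ENNReal.ofReal ((2 ^ (d * (d * (d - 1) / 2 + 2)) * d ^ d : ℕ) * v) ≤ volume 𝒞 →
          ∃ B ∈ 𝔔, B ⊆ 𝒞 := by
  classical
  set k := 3 * d ^ 2 - 1 with hk
  have hk1 : k + 1 = 3 * d ^ 2 := by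
    have : 1 ≤ d ^ 2 := Nat.one_le_pow _ _ hd
    omega
  have hd1 : (1 : ℝ) ≤ d := by exact_mod_cast hd
  refine ⟨(18 * d ^ (d + 4)) ^ k, fun N hN v hv0 hv1 => ?_⟩
  have hN1 : 1 ≤ N := (Nat.one_le_pow _ _ (by positivity)).trans hN
  have hNR : (0 : ℝ) < N := by exact_mod_cast hN1
  have hv : 0 < v := lt_of_lt_of_le (by positivity) hv0
  set ε : ℝ := 1 / (6 * d ^ (d + 3) * N) with hεd
  have hε : 0 < ε := by positivity
  have hL1 : 1 ≤ 6 * d ^ (d + 4) * N := Nat.one_le_iff_ne_zero.mpr (by positivity)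
  obtain ⟨F, hF, hcard, hnet⟩ := par_net d hd v (6 * d ^ (d + 4) * N) ε hε (by
    rw [hεd]; push_cast
    apply le_of_eq
    field_simp
    ring)
  refine ⟨F.image rbox, ?_, ?_, ?_⟩
  · refine Finset.card_image_le.trans (hcard.trans ?_)
    calc (2 * (6 * d ^ (d + 4) * N) + 1) ^ k ≤ (18 * d ^ (d + 4) * N) ^ k :=
          Nat.pow_le_pow_left (by linarith) _
      _ = (18 * d ^ (d + 4)) ^ k * N ^ k := by rw [mul_pow]
      _ ≤ N * N ^ k := Nat.mul_le_mul_right _ hN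
      _ = N ^ (3 * d ^ 2) := by rw [← hk1, pow_succ, mul_comm]
  · intro B hB
    obtain ⟨p, hp, rfl⟩ := Finset.mem_image.mp hB
    have h := hF p hp
    exact ⟨⟨p.1, p.2.1, p.2.2, h.1, h.2.1, h.2.2.1, h.2.2.2.2.1, rfl⟩, volume_rbox h⟩
  · intro K hK01 hK hconv hvol
    have hcv : 0 < ((2 ^ (d * (d * (d - 1) / 2 + 2)) * d ^ d : ℕ) : ℝ) * v := by positivity
    have hne : K.Nonempty := by
      by_contra h
      rw [Set.not_nonempty_iff_eq_empty] at h
      rw [h, measure_empty, nonpos_iff_eq_zero, ENNReal.ofReal_eq_zero] at hvol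
      linarith
    obtain ⟨R, l, t, hR, hdet, hl, hout, hin⟩ := geo_matrix d hd K hK hconv hne
    have hlv : ((2 ^ (d * (d * (d - 1) / 2 + 2)) * d ^ d : ℕ) : ℝ) * v ≤ ∏ i, l i :=
      (ENNReal.ofReal_le_ofReal_iff (Finset.prod_nonneg fun i _ => hl i)).mp
        (hvol.trans (volume_le_of_rot hdet l hl K hout))
    set h : Fin d → ℝ := fun i => l i / 4 ^ ((i : ℕ) + 1) with hh
    have hh0 : ∀ i, 0 ≤ h i := fun i => div_nonneg (hl i) (by positivity)
    have hprod : v ≤ ∏ i, h i := by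
      rw [hh, Finset.prod_div_distrib, prod_four, le_div_iff₀ (by positivity), mul_comm]
      refine le_trans ?_ hlv
      gcongr
      exact_mod_cast const_le d hd
    have hhpos : ∀ i, 0 < h i := by
      intro i
      refine (hh0 i).lt_of_ne' fun h0 => ?_
      rw [Finset.prod_eq_zero (Finset.mem_univ i) h0] at hprod
      linarith
    have htK : t ∈ K := hin t (by intro i; simpa using hh0 i)
    have hhd : ∀ i, h i ≤ d := by
      intro i
      have hmem : t + R *ᵥ (Pi.single i (h i)) ∈ K := by
        apply hin
        intro j
        rw [add_sub_cancel_left, Matrix.mulVec_mulVec, hR, Matrix.one_mulVec]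
        by_cases hij : j = i
        · subst hij
          rw [Pi.single_eq_same, abs_of_pos (hhpos j)]
        · rw [Pi.single_eq_of_ne hij, abs_zero]
          exact hh0 j
      have hb : ∀ j, |R j i * h i| ≤ 1 := by
        intro j
        have a1 := (hK01 hmem).1 j
        have a2 := (hK01 hmem).2 j
        have a3 := (hK01 htK).1 j
        have a4 := (hK01 htK).2 j
        simp only [Pi.add_apply, Pi.zero_apply, Pi.one_apply, Matrix.mulVec_single,
          Pi.smul_apply, Matrix.col_apply, MulOpposite.smul_eq_mul_unop,
          MulOpposite.unop_op] at a1 a2 a3 a4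
        rw [abs_le]; constructor <;> linarith
      have h1 := congrFun (congrFun hR i) i
      rw [Matrix.mul_apply, Matrix.one_apply_eq] at h1
      calc h i = ∑ j, Rᵀ i j * (R j i * h i) := by
            simp_rw [← mul_assoc]
            rw [← Finset.sum_mul, h1, one_mul]
        _ ≤ ∑ j : Fin d, (1 : ℝ) := by
            refine Finset.sum_le_sum fun j _ => ?_
            refine (le_abs_self _).trans ?_
            rw [abs_mul]
            exact mul_le_one₀ (orth_entry_le hR j i) (abs_nonneg _) (hb j)
        _ = d := by simp
    have hlow : ∀ i, 6 * d ^ 3 * ε ≤ h i := by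
      intro i
      have h1 : v ≤ h i * d ^ d := by
        refine hprod.trans ?_
        rw [← Finset.mul_prod_erase _ _ (Finset.mem_univ i)]
        refine mul_le_mul_of_nonneg_left ?_ (hh0 i)
        calc ∏ j ∈ Finset.univ.erase i, h j ≤ ∏ j ∈ Finset.univ.erase i, (d : ℝ) :=
              Finset.prod_le_prod (fun j _ => hh0 j) (fun j _ => hhd j)
          _ = (d : ℝ) ^ (d - 1) := by simp
          _ ≤ d ^ d := pow_le_pow_right₀ hd1 (by omega)
      have h2 : 6 * d ^ 3 * ε = 1 / N / d ^ d := by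
        rw [hεd, pow_add]
        field_simp
      rw [h2, div_le_iff₀ (by positivity)]
      exact hv0.trans h1
    have hPpos : 0 < ∏ i, h i := Finset.prod_pos fun i _ => hhpos i
    obtain ⟨η, hη0, hη1, hη⟩ : ∃ η : ℝ, 0 < η ∧ η ≤ 1 ∧ η ^ d = v / ∏ i, h i := by
      refine ⟨(v / ∏ i, h i) ^ (1 / (d : ℝ)), by positivity, ?_, ?_⟩
      · exact Real.rpow_le_one (by positivity) ((div_le_one hPpos).mpr hprod) (by positivity)
      · rw [← Real.rpow_natCast, ← Real.rpow_mul (by positivity), one_div,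
          inv_mul_cancel₀ (by positivity), Real.rpow_one]
    have hs : ∀ i, h i * η / 2 ≤ h i / 2 := by
      intro i
      have := mul_le_of_le_one_right (hh0 i) hη1
      linarith
    have hp : ((R, (fun i => h i * η / 2), t) : Par d) ∈ parSet d v := by
      refine ⟨hR, hdet, fun i => ?_, fun i => ?_, hK01 htK, ?_⟩
      · have := hhpos i
        simp only
        positivity
      · have := hs i
        have := hhd i
        have := hh0 i
        simp only
        linarith
      · have : ∀ i, 2 * (h i * η / 2) = h i * η := fun i => by ring
        simp only [this]
        rw [Finset.prod_mul_distrib, Finset.prod_const, Finset.card_univ, Fintype.card_fin, hη]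
        field_simp
    obtain ⟨p', hp'F, c1, c2, c3⟩ := hnet _ hp
    refine ⟨rbox p', Finset.mem_image_of_mem _ hp'F, fun x hx => ?_⟩
    apply hin
    intro i
    refine (rbox_close hd hε hp (hF p' hp'F) c1 c2 c3 x hx i).trans ?_
    have a1 := hs i
    have a2 := hlow i
    change h i * η / 2 + 3 * d ^ 3 * ε ≤ h i
    linarith
end
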